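/- Every finite-dimensional Leibniz algebra A over a field F of dimension d ≥ 2 satisfies l(A) ≤ d. -/

import Mathlib

/-!
Framework: length of finite-dimensional not necessarily associative,
not necessarily unital algebras (non-unital convention: `L_0(S) = 0`).
The multiplication of the algebra is passed explicitly as a binary
operation `μ`, so that the same definitions apply to an algebra, to its
commutator algebra, to a Lie bracket, etc.
-/

open Submodule Module

/-- `IsWord μ S k w`: `w` is a product of `k` elements of `S` (with respect to the
multiplication `μ`) with some placement of parentheses. -/
inductive IsWord {A : Type*} (μ : A → A → A) (S : Set A) : ℕ → A → Prop
  | base {a : A} (ha : a ∈ S) : IsWord μ S 1 a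
  | mul {m n : ℕ} {a b : A} (ha : IsWord μ S m a) (hb : IsWord μ S n b) :
      IsWord μ S (m + n) (μ a b)

/-- The multiplication of an algebra, as a plain binary operation. -/
def amul (A : Type*) [Mul A] : A → A → A := fun a b => a * b

section
variable (F : Type*) {A : Type*} [Field F] [AddCommGroup A] [Module F A]

/-- `L_i(S)`: the linear span of all words in `S` of length at most `i`
(non-unital convention, so `L_0(S) = 0`). -/
def Lset (μ : A → A → A) (S : Set A) (i : ℕ) : Submodule F A :=
  Submodule.span F {a | ∃ k, k ≤ i ∧ IsWord μ S k a}

/-- `S` generates the algebra, i.e. the span of all words in `S` is everything. -/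
def Generates (μ : A → A → A) (S : Set A) : Prop :=
  Submodule.span F {a | ∃ k, IsWord μ S k a} = ⊤

/-- `l(S)`: the length of a generating set `S`, the least `k` with `L_k(S) = A`. -/
noncomputable def lenSet (μ : A → A → A) (S : Set A) : ℕ :=
  sInf {k | Lset F μ S k = ⊤}

/-- An irreducible word of length `k` in `S`. -/
def IrredWord (μ : A → A → A) (S : Set A) (k : ℕ) (w : A) : Prop :=
  IsWord μ S k w ∧ ∀ m, m < k → w ∉ Lset F μ S m

end

section
variable {A : Type*}

/-- The set `P(x,y,z)` of monomials. -/
def Pset (μ : A → A → A) (x y z : A) : Set A :=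
  {μ (μ x z) y, μ (μ z x) y, μ (μ y z) x, μ (μ z y) x,
   μ x (μ z y), μ x (μ y z), μ y (μ x z), μ y (μ z x),
   μ x y, μ y x, μ x z, μ z x, μ y z, μ z y, x, y, z}

/-- The set `Q_l(x,y,z)` of monomials. -/
def Qlset (μ : A → A → A) (x y z : A) : Set A :=
  {μ x (μ z y), μ x (μ y z), μ y (μ x z), μ y (μ z x),
   μ x y, μ y x, μ x z, μ z x, μ y z, μ z y, x, y, z}

/-- The set `Q_r(x,y,z)` of monomials. -/
def Qrset (μ : A → A → A) (x y z : A) : Set A :=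
  {μ (μ x z) y, μ (μ z x) y, μ (μ y z) x, μ (μ z y) x,
   μ x y, μ y x, μ x z, μ z x, μ y z, μ z y, x, y, z}

end

section
variable (F : Type*) {A : Type*} [Field F] [AddCommGroup A] [Module F A]

/-- A mixing algebra: `(xy)z` and `z(xy)` lie in the span of `P(x,y,z)`. -/
def IsMixing (μ : A → A → A) : Prop :=
  ∀ x y z : A, μ (μ x y) z ∈ Submodule.span F (Pset μ x y z) ∧
    μ z (μ x y) ∈ Submodule.span F (Pset μ x y z)

/-- A sliding algebra: either `z(xy)` always lies in the span of `Q_r(x,y,z)`, or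
`(xy)z` always lies in the span of `Q_l(x,y,z)`. -/
def IsSliding (μ : A → A → A) : Prop :=
  (∀ x y z : A, μ z (μ x y) ∈ Submodule.span F (Qrset μ x y z)) ∨
  (∀ x y z : A, μ (μ x y) z ∈ Submodule.span F (Qlset μ x y z))

end

section
variable {F B : Type*} [Field F]

theorem Lset_mono [AddCommGroup B] [Module F B] (μ : B → B → B) (S : Set B) :
    Monotone (Lset F μ S) := fun _ _ hij =>
  Submodule.span_mono fun _ ⟨k, hk, hw⟩ => ⟨k, hk.trans hij, hw⟩

theorem subset_Lset_succ [AddCommGroup B] [Module F B] (μ : B → B → B) (S : Set B) (k : ℕ) :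
    S ⊆ Lset F μ S (k + 1) := fun _ hs =>
  Submodule.subset_span ⟨1, by omega, .base hs⟩

variable [NonUnitalNonAssocRing B] [Module F B]

theorem mul_mem_Lset_succ [IsScalarTower F B B] {S : Set B} {k : ℕ} {x s : B}
    (hx : x ∈ Lset F (amul B) S k) (hs : s ∈ S) : x * s ∈ Lset F (amul B) S (k + 1) := by
  unfold Lset at hx
  induction hx using Submodule.span_induction with
  | mem x h =>
    obtain ⟨m, hm, hw⟩ := h
    exact Submodule.subset_span ⟨m + 1, by omega, .mul hw (.base hs)⟩
  | zero => simp
  | add x y _ _ hx hy => rw [add_mul]; exact add_mem hx hy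
  | smul c x _ hx => rw [smul_mul_assoc]; exact Submodule.smul_mem _ c hx

/-- In a Leibniz algebra, a subspace stable under right multiplication by `S` is stable under
right multiplication by every word in `S`. -/
theorem IsWord.mul_mem_of_leibniz
    (hleibniz : ∀ x y z : B, (x * y) * z = x * (y * z) + (x * z) * y)
    {S : Set B} {V : Submodule F B} (hV : ∀ x ∈ V, ∀ s ∈ S, x * s ∈ V)
    {n : ℕ} {w : B} (hw : IsWord (amul B) S n w) : ∀ x ∈ V, x * w ∈ V := by
  induction hw with
  | base hs => exact fun x hx => hV x hx _ hs
  | @mul _ _ a b _ _ iha ihb =>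
    intro x hx
    have h : x * (a * b) = (x * a) * b - (x * b) * a := by rw [hleibniz x a b]; abel
    change x * (a * b) ∈ V
    rw [h]
    exact sub_mem (ihb _ (iha x hx)) (iha _ (ihb x hx))

/-- In a Leibniz algebra, a subspace containing a generating set `S` and stable under right
multiplication by `S` is everything. -/
theorem Generates.eq_top_of_leibniz
    (hleibniz : ∀ x y z : B, (x * y) * z = x * (y * z) + (x * z) * y)
    {S : Set B} (hS : Generates F (amul B) S) {V : Submodule F B} (hSV : S ⊆ V)
    (hV : ∀ x ∈ V, ∀ s ∈ S, x * s ∈ V) : V = ⊤ := by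
  rw [eq_top_iff, ← hS, Submodule.span_le]
  rintro w ⟨n, hw⟩
  induction hw with
  | base hs => exact hSV hs
  | mul _ hb iha _ => exact hb.mul_mem_of_leibniz hleibniz hV _ iha

/-- The chain `L_k(S)` in a Leibniz algebra gains a dimension at each step until it is
everything. -/
theorem Lset_eq_top_or_le_finrank [IsScalarTower F B B] [FiniteDimensional F B]
    (hleibniz : ∀ x y z : B, (x * y) * z = x * (y * z) + (x * z) * y)
    {S : Set B} (hS : Generates F (amul B) S) (k : ℕ) :
    Lset F (amul B) S k = ⊤ ∨ k ≤ finrank F (Lset F (amul B) S k) := by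
  induction k with
  | zero => exact .inr (Nat.zero_le _)
  | succ k ih =>
    have hle := Lset_mono (F := F) (amul B) S k.le_succ
    rcases hle.eq_or_lt with heq | hlt
    · have hk : Lset F (amul B) S k = ⊤ := by
        refine hS.eq_top_of_leibniz hleibniz ?_ fun x hx s hs => ?_
        · rw [heq]; exact subset_Lset_succ _ S k
        · rw [heq]; exact mul_mem_Lset_succ hx hs
      exact .inl (heq ▸ hk)
    · rcases ih with htop | hk
      · exact absurd htop hlt.ne_top
      · exact .inr (hk.trans_lt (Submodule.finrank_lt_finrank_of_lt hlt))

end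

/-- every finite-dimensional Leibniz algebra of dimension `d ≥ 2` has
length at most `d`, i.e. every finite generating set has length at most `d`. -/
theorem leibniz_length_le_dim
    {F B : Type*} [Field F] [NonUnitalNonAssocRing B] [Module F B]
    [SMulCommClass F B B] [IsScalarTower F B B] [FiniteDimensional F B]
    (hleibniz : ∀ x y z : B, (x * y) * z = x * (y * z) + (x * z) * y)
    (hdim : 2 ≤ finrank F B) :
    ∀ S : Set B, S.Finite → Generates F (amul B) S →
      lenSet F (amul B) S ≤ finrank F B := by
  intro S _ hS
  refine Nat.sInf_le ?_
  rcases Lset_eq_top_or_le_finrank hleibniz hS (finrank F B) with h | h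
  · exact h
  · exact Submodule.eq_top_of_finrank_eq (le_antisymm (Submodule.finrank_le _) h)
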